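/- Fix T > 0, t ∈ [0,T), s > 0, S₀ > 0 and g ∈ ℝ. With κ, η, Λ and the payoff data as defined, let H(λ; u, x) := ∫_ℝ x^{z_y}·e^{η(λ,z_y)(T−u)}·p(z_y) dy and χ(λ) := (Λ(λ)/s)·(H(λ; t, s) − H(λ; 0, S₀) − g) for λ ∈ [0,1]. Then λ ↦ χ(λ) is twice continuously differentiable on [0,1], with: χ(0) = (Λ(0)/s)·(C(t,s) − C(0,S₀) − g); χ'(0) = (Λ'(0)/s)·(C(t,s) − C(0,S₀) − g) + (Λ(0)/s)·(∂_λH(0; t, s) − ∂_λH(0; 0, S₀)); and χ''(0) = (Λ''(0)/s)·(C(t,s) − C(0,S₀) − g) + 2(Λ'(0)/s)·(∂_λH(0; t, s) − ∂_λH(0; 0, S₀)) + (Λ(0)/s)·(∂²_λH(0; t, s) − ∂²_λH(0; 0, S₀)), where C is the Black–Scholes price function, Λ(λ) := κ(λ,1)/(κ(λ,2) − 2κ(λ,1)), and ∂_λH, ∂²_λH denote the first and second partial derivatives of H in λ. -/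

import Mathlib

open MeasureTheory Complex Set

/-- Cumulant generating function `κ(λ, z)` of the interpolating family. -/
noncomputable def kappa (μ c : ℝ) (K : Measure ℝ) (lam : ℝ) (z : ℂ) : ℂ :=
  if lam = 0 then (μ : ℂ) * z + (((c + ∫ x : ℝ, x ^ 2 ∂K) : ℝ) : ℂ) / 2 * z ^ 2
  else (μ : ℂ) * z + (c : ℂ) / 2 * z ^ 2 +
    ((lam : ℂ) ^ 2)⁻¹ *
      ∫ x : ℝ, (Complex.exp ((lam : ℂ) * z * (x : ℂ)) - 1 - (lam : ℂ) * z * (x : ℂ)) ∂K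

noncomputable def kbar (μ c : ℝ) (K : Measure ℝ) (lam : ℝ) (y z : ℂ) : ℂ :=
  kappa μ c K lam (y + z) - kappa μ c K lam y - kappa μ c K lam z

noncomputable def gamLK (μ c : ℝ) (K : Measure ℝ) (lam : ℝ) (z : ℂ) : ℂ :=
  kbar μ c K lam z 1 / kbar μ c K lam 1 1

noncomputable def etaLK (μ c : ℝ) (K : Measure ℝ) (lam : ℝ) (z : ℂ) : ℂ :=
  kappa μ c K lam z - kappa μ c K lam 1 * gamLK μ c K lam z

noncomputable def cpowR (s : ℝ) (z : ℂ) : ℂ := Complex.exp (z * Real.log s)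

noncomputable def zLine (R y : ℝ) : ℂ := (R : ℂ) + (y : ℂ) * Complex.I

/-- Fourier transform `l̂(y) = ∫ l(x) e^{-ixy} dx`. -/
noncomputable def lhat (l : ℝ → ℝ) (y : ℝ) : ℂ :=
  ∫ x : ℝ, (l x : ℂ) * Complex.exp (-(Complex.I * (x : ℂ) * (y : ℂ)))

noncomputable def pCoef (l : ℝ → ℝ) (y : ℝ) : ℂ := lhat l y / (2 * (Real.pi : ℂ))

/-- Black-Scholes cash greek `D_n(t,s)` in integral form (with `C = D_0`). -/
noncomputable def cashGreek (σ2 T R : ℝ) (l : ℝ → ℝ) (n : ℕ) (t s : ℝ) : ℂ :=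
  ∫ y : ℝ, (∏ k ∈ Finset.range n, (zLine R y - (k : ℂ))) * cpowR s (zLine R y) *
    Complex.exp (((σ2 : ℂ) / 2) * zLine R y * (zLine R y - 1) * ((T : ℂ) - (t : ℂ))) * pCoef l y

/-- The mean-variance ratio `Λ(λ) = κ(λ,1) / (κ(λ,2) − 2κ(λ,1))`. -/
noncomputable def LamMV (μ c : ℝ) (K : Measure ℝ) (lam : ℝ) : ℂ :=
  kappa μ c K lam 1 / (kappa μ c K lam 2 - 2 * kappa μ c K lam 1)


noncomputable def phiK (k : ℕ) (w : ℂ) : ℂ :=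
  ∫ r in (0:ℝ)..1, ((1 - (r:ℂ)) * (r:ℂ) ^ k) * Complex.exp ((r:ℂ) * w)

lemma norm_phi_coef (k : ℕ) (r : ℝ) (h0 : 0 ≤ r) (h1 : r ≤ 1) :
    ‖(1 - (r:ℂ)) * (r:ℂ) ^ k‖ ≤ 1 := by
  have : (1 - (r:ℂ)) * (r:ℂ) ^ k = (((1 - r) * r ^ k : ℝ) : ℂ) := by push_cast; ring
  rw [this, Complex.norm_real, Real.norm_eq_abs, abs_of_nonneg (mul_nonneg (by linarith) (by positivity))]
  have := pow_le_one₀ (n := k) h0 h1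
  have := pow_nonneg h0 k
  nlinarith

lemma phiK_hasDerivAt (k : ℕ) (w : ℂ) : HasDerivAt (phiK k) (phiK (k + 1) w) w := by
  unfold phiK
  refine (intervalIntegral.hasDerivAt_integral_of_dominated_loc_of_deriv_le
    (F := fun (w : ℂ) (r : ℝ) => ((1 - (r:ℂ)) * (r:ℂ) ^ k) * Complex.exp ((r:ℂ) * w))
    (F' := fun (w : ℂ) (r : ℝ) => ((1 - (r:ℂ)) * (r:ℂ) ^ (k+1)) * Complex.exp ((r:ℂ) * w))
    (s := Metric.ball w 1) (bound := fun _ => Real.exp (‖w‖ + 1))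
    (Metric.ball_mem_nhds w one_pos) ?_ ?_ ?_ ?_ ?_ ?_).2
  · refine Filter.Eventually.of_forall fun v => ?_
    exact (by fun_prop : Continuous fun r : ℝ =>
      ((1 - (r:ℂ)) * (r:ℂ) ^ k) * Complex.exp ((r:ℂ) * v)).aestronglyMeasurable
  · exact (by fun_prop : Continuous fun r : ℝ =>
      ((1 - (r:ℂ)) * (r:ℂ) ^ k) * Complex.exp ((r:ℂ) * w)).intervalIntegrable _ _
  · exact (by fun_prop : Continuous fun r : ℝ =>
      ((1 - (r:ℂ)) * (r:ℂ) ^ (k+1)) * Complex.exp ((r:ℂ) * w)).aestronglyMeasurable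
  · refine Filter.Eventually.of_forall fun r hr v hv => ?_
    rw [uIoc_of_le zero_le_one] at hr
    rw [norm_mul, Complex.norm_exp]
    have h1 := norm_phi_coef (k+1) r hr.1.le hr.2
    have h2 : ((r:ℂ) * v).re ≤ ‖w‖ + 1 := by
      refine (Complex.re_le_norm _).trans ?_
      rw [norm_mul, Complex.norm_real, Real.norm_eq_abs, abs_of_pos hr.1]
      have : ‖v‖ ≤ ‖w‖ + 1 := by
        have h3 : ‖v - w‖ < 1 := by simpa [dist_eq_norm] using hv
        have := norm_le_norm_add_norm_sub' v w
        linarith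
      nlinarith [norm_nonneg v, hr.1, hr.2]
    calc _ ≤ 1 * Real.exp (‖w‖ + 1) := by gcongr
      _ = _ := one_mul _
  · exact intervalIntegrable_const
  · refine Filter.Eventually.of_forall fun r hr v hv => ?_
    have h : HasDerivAt (fun v : ℂ => (r:ℂ) * v) (r:ℂ) v := by
      simpa using (hasDerivAt_id v).const_mul (r:ℂ)
    refine ((h.cexp).const_mul ((1 - (r:ℂ)) * (r:ℂ) ^ k)).congr_deriv ?_
    ring

lemma phiK_continuous (k : ℕ) : Continuous (phiK k) :=
  continuous_iff_continuousAt.2 fun w => (phiK_hasDerivAt k w).continuousAt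

lemma sq_mul_phiK_zero (w : ℂ) : w ^ 2 * phiK 0 w = Complex.exp w - 1 - w := by
  unfold phiK
  rw [← intervalIntegral.integral_const_mul]
  have h : ∀ r ∈ uIcc (0:ℝ) 1, HasDerivAt
      (fun r : ℝ => ((1 - (r:ℂ)) * w + 1) * Complex.exp ((r:ℂ) * w))
      (w ^ 2 * (((1 - (r:ℂ)) * (r:ℂ) ^ 0) * Complex.exp ((r:ℂ) * w))) r := by
    intro r _
    have h1 : HasDerivAt (fun v : ℂ => ((1 - v) * w + 1) * Complex.exp (v * w))
        (w ^ 2 * (((1 - (r:ℂ)) * (r:ℂ) ^ 0) * Complex.exp ((r:ℂ) * w))) (r:ℂ) := by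
      have h2 : HasDerivAt (fun v : ℂ => v * w) w (r:ℂ) := by
        simpa using (hasDerivAt_id (r:ℂ)).mul_const w
      have h3 : HasDerivAt (fun v : ℂ => (1 - v) * w + 1) (-w) (r:ℂ) := by
        simpa using (((hasDerivAt_id (r:ℂ)).const_sub 1).mul_const w).add_const 1
      refine (h3.mul h2.cexp).congr_deriv ?_
      ring
    exact h1.comp_ofReal
  rw [intervalIntegral.integral_eq_sub_of_hasDerivAt h
    ((by fun_prop : Continuous fun r : ℝ => (w ^ 2 * (((1 - (r:ℂ)) * (r:ℂ) ^ 0) * Complex.exp ((r:ℂ) * w)))).intervalIntegrable _ _)]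
  simp
  ring

lemma phiK_zero_zero : phiK 0 0 = 1 / 2 := by
  unfold phiK
  have h : ∀ r ∈ uIcc (0:ℝ) 1, HasDerivAt
      (fun r : ℝ => (r:ℂ) - (r:ℂ)^2 / 2)
      (((1 - (r:ℂ)) * (r:ℂ) ^ 0) * Complex.exp ((r:ℂ) * 0)) r := by
    intro r _
    have h1 : HasDerivAt (fun v : ℂ => v - v ^ 2 / 2)
        (((1 - (r:ℂ)) * (r:ℂ) ^ 0) * Complex.exp ((r:ℂ) * 0)) (r:ℂ) := by
      refine ((hasDerivAt_id (r:ℂ)).sub (((hasDerivAt_id (r:ℂ)).pow 2).div_const 2)).congr_deriv ?_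
      simp
    exact h1.comp_ofReal
  rw [intervalIntegral.integral_eq_sub_of_hasDerivAt h
    ((by fun_prop : Continuous fun r : ℝ => (((1 - (r:ℂ)) * (r:ℂ) ^ 0) * Complex.exp ((r:ℂ) * 0))).intervalIntegrable _ _)]
  norm_num

lemma exp_le_exp_add {a b θ x : ℝ} (h1 : a ≤ θ) (h2 : θ ≤ b) :
    Real.exp (θ * x) ≤ Real.exp (a * x) + Real.exp (b * x) := by
  rcases le_total 0 x with h | h
  · have : Real.exp (θ * x) ≤ Real.exp (b * x) := Real.exp_le_exp.2 (by gcongr)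
    linarith [Real.exp_pos (a * x)]
  · have : Real.exp (θ * x) ≤ Real.exp (a * x) := Real.exp_le_exp.2 (by nlinarith)
    linarith [Real.exp_pos (b * x)]

lemma norm_phiK_le (k : ℕ) {a b θ x : ℝ} (ha : a ≤ 0) (hb : 0 ≤ b) (h1 : a ≤ θ) (h2 : θ ≤ b)
    {w : ℂ} (hw : w.re = θ * x) : ‖phiK k w‖ ≤ Real.exp (a * x) + Real.exp (b * x) := by
  unfold phiK
  have := intervalIntegral.norm_integral_le_of_norm_le_const (a := (0:ℝ)) (b := 1)
    (f := fun r : ℝ => ((1 - (r:ℂ)) * (r:ℂ) ^ k) * Complex.exp ((r:ℂ) * w))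
    (C := Real.exp (a * x) + Real.exp (b * x)) (by
      intro r hr
      rw [uIoc_of_le zero_le_one] at hr
      rw [norm_mul, Complex.norm_exp]
      have h3 := norm_phi_coef k r hr.1.le hr.2
      have h4 : ((r:ℂ) * w).re = (r * θ) * x := by simp [hw]; ring
      rw [h4]
      have h5 := exp_le_exp_add (a := a) (b := b) (θ := r * θ) (x := x)
        (by nlinarith [hr.1, hr.2]) (by nlinarith [hr.1, hr.2])
      have h6 := Real.exp_pos (r * θ * x)
      nlinarith)
  simpa using this

/-! ### integrals against the Levy measure -/

noncomputable def PhiK (K : Measure ℝ) (k : ℕ) (lam : ℝ) (z : ℂ) : ℂ :=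
  ∫ x : ℝ, (x:ℂ) ^ (k + 2) * phiK k ((lam:ℂ) * z * (x:ℂ)) ∂K

noncomputable def domK (a b : ℝ) (k : ℕ) (x : ℝ) : ℝ :=
  |x| ^ (k + 2) * (Real.exp (a * x) + Real.exp (b * x))

lemma norm_integrand_le (k : ℕ) {a b : ℝ} (ha : a ≤ 0) (hb : 0 ≤ b) {lam : ℝ} {z : ℂ}
    (h1 : a ≤ lam * z.re) (h2 : lam * z.re ≤ b) (x : ℝ) :
    ‖(x:ℂ) ^ (k + 2) * phiK k ((lam:ℂ) * z * (x:ℂ))‖ ≤ domK a b k x := by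
  rw [norm_mul, norm_pow, Complex.norm_real, Real.norm_eq_abs, domK]
  gcongr
  exact norm_phiK_le k ha hb h1 h2 (by simp)

lemma integrand_continuous (k : ℕ) (lam : ℝ) (z : ℂ) :
    Continuous fun x : ℝ => (x:ℂ) ^ (k + 2) * phiK k ((lam:ℂ) * z * (x:ℂ)) := by
  have := phiK_continuous k
  fun_prop

lemma integrand_integrable {K : Measure ℝ} (k : ℕ) {a b : ℝ} (ha : a ≤ 0) (hb : 0 ≤ b)
    (hG : ∀ k, Integrable (domK a b k) K) {lam : ℝ} {z : ℂ}
    (h1 : a ≤ lam * z.re) (h2 : lam * z.re ≤ b) :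
    Integrable (fun x : ℝ => (x:ℂ) ^ (k + 2) * phiK k ((lam:ℂ) * z * (x:ℂ))) K :=
  (hG k).mono' (integrand_continuous k lam z).aestronglyMeasurable
    (Filter.Eventually.of_forall (norm_integrand_le k ha hb h1 h2))

lemma norm_PhiK_le {K : Measure ℝ} (k : ℕ) {a b : ℝ} (ha : a ≤ 0) (hb : 0 ≤ b)
    (hG : ∀ k, Integrable (domK a b k) K) {lam : ℝ} {z : ℂ}
    (h1 : a ≤ lam * z.re) (h2 : lam * z.re ≤ b) :
    ‖PhiK K k lam z‖ ≤ ∫ x, domK a b k x ∂K :=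
  norm_integral_le_of_norm_le (hG k)
    (Filter.Eventually.of_forall (norm_integrand_le k ha hb h1 h2))

lemma PhiK_hasDerivAt {K : Measure ℝ} (k : ℕ) {a b : ℝ} (ha : a ≤ 0) (hb : 0 ≤ b)
    (hG : ∀ k, Integrable (domK a b k) K) {V : Set ℝ} (hV : IsOpen V) {z : ℂ}
    (hz : ∀ lam ∈ V, a ≤ lam * z.re ∧ lam * z.re ≤ b) {lam : ℝ} (hl : lam ∈ V) :
    HasDerivAt (fun lam : ℝ => PhiK K k lam z) (z * PhiK K (k + 1) lam z) lam := by
  have key := (hasDerivAt_integral_of_dominated_loc_of_deriv_le (μ := K)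
    (F := fun (lam : ℝ) (x : ℝ) => (x:ℂ) ^ (k + 2) * phiK k ((lam:ℂ) * z * (x:ℂ)))
    (F' := fun (lam : ℝ) (x : ℝ) => z * ((x:ℂ) ^ (k + 1 + 2) * phiK (k + 1) ((lam:ℂ) * z * (x:ℂ))))
    (s := V) (bound := fun x => ‖z‖ * domK a b (k + 1) x)
    (hV.mem_nhds hl) ?_ ?_ ?_ ?_ ?_ ?_).2
  · rw [integral_const_mul] at key
    exact key
  · exact Filter.Eventually.of_forall fun l => (integrand_continuous k l z).aestronglyMeasurable
  · exact integrand_integrable k ha hb hG (hz lam hl).1 (hz lam hl).2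
  · exact ((integrand_continuous (k+1) lam z).const_smul z).aestronglyMeasurable
  · refine Filter.Eventually.of_forall fun x l hl => ?_
    rw [norm_mul]
    gcongr
    exact norm_integrand_le (k+1) ha hb (hz l hl).1 (hz l hl).2 x
  · exact (hG (k+1)).const_mul _
  · refine Filter.Eventually.of_forall fun x l hl => ?_
    have h1 : HasDerivAt (fun v : ℂ => v * z * (x:ℂ)) (z * x) (l:ℂ) := by
      simpa using ((hasDerivAt_id (l:ℂ)).mul_const z).mul_const (x:ℂ)
    have h2 := ((phiK_hasDerivAt k ((l:ℂ) * z * (x:ℂ))).comp (l:ℂ) h1).const_mul ((x:ℂ) ^ (k+2))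
    refine h2.comp_ofReal.congr_deriv ?_
    ring

lemma PhiK_continuous_line {K : Measure ℝ} (k : ℕ) {a b : ℝ} (ha : a ≤ 0) (hb : 0 ≤ b)
    (hG : ∀ k, Integrable (domK a b k) K) {lam : ℝ} {z : ℝ → ℂ} (hzc : Continuous z)
    (hz : ∀ y, a ≤ lam * (z y).re ∧ lam * (z y).re ≤ b) :
    Continuous fun y => PhiK K k lam (z y) := by
  refine continuous_of_dominated (bound := domK a b k)
    (fun y => (integrand_continuous k lam (z y)).aestronglyMeasurable)
    (fun y => Filter.Eventually.of_forall (norm_integrand_le k ha hb (hz y).1 (hz y).2)) (hG k) ?_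
  refine Filter.Eventually.of_forall fun x => ?_
  have := phiK_continuous k
  fun_prop

/-! ### a class of smooth, polynomially bounded functions -/

def Nice0 (U : Set ℝ) (q : ℝ → ℝ → ℂ) : Prop :=
  (∀ y, ContinuousOn (fun l => q l y) U) ∧ (∀ l ∈ U, Continuous (q l)) ∧
    ∃ (C : ℝ) (N : ℕ), 0 ≤ C ∧ ∀ l ∈ U, ∀ y, ‖q l y‖ ≤ C * (1 + |y|) ^ N

def Nice (U : Set ℝ) : ℕ → (ℝ → ℝ → ℂ) → Prop
  | 0, q => Nice0 U q
  | n + 1, q => Nice0 U q ∧ ∃ q' : ℝ → ℝ → ℂ,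
      (∀ l ∈ U, ∀ y, HasDerivAt (fun l => q l y) (q' l y) l) ∧ Nice U n q'

lemma Nice.zero {U : Set ℝ} {n : ℕ} {q : ℝ → ℝ → ℂ} (h : Nice U n q) : Nice0 U q := by
  cases n with
  | zero => exact h
  | succ n => exact h.1

lemma Nice.pred {U : Set ℝ} {n : ℕ} {q : ℝ → ℝ → ℂ} (h : Nice U (n + 1) q) : Nice U n q := by
  induction n generalizing q with
  | zero => exact h.1
  | succ n ih =>
    obtain ⟨h0, q', hq', hn⟩ := h
    exact ⟨h0, q', hq', ih hn⟩

lemma Nice0.add {U : Set ℝ} {q r : ℝ → ℝ → ℂ} (hq : Nice0 U q) (hr : Nice0 U r) :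
    Nice0 U (fun l y => q l y + r l y) := by
  obtain ⟨q1, q2, C, N, hC, q3⟩ := hq
  obtain ⟨r1, r2, D, M, hD, r3⟩ := hr
  refine ⟨fun y => (q1 y).add (r1 y), fun l hl => (q2 l hl).add (r2 l hl), C + D, N + M,
    by positivity, fun l hl y => ?_⟩
  have h1 : (1:ℝ) ≤ 1 + |y| := by linarith [abs_nonneg y]
  have h2 : (1 + |y|) ^ N ≤ (1 + |y|) ^ (N + M) := pow_le_pow_right₀ h1 (by omega)
  have h3 : (1 + |y|) ^ M ≤ (1 + |y|) ^ (N + M) := pow_le_pow_right₀ h1 (by omega)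
  calc ‖q l y + r l y‖ ≤ ‖q l y‖ + ‖r l y‖ := norm_add_le _ _
    _ ≤ C * (1 + |y|) ^ N + D * (1 + |y|) ^ M := add_le_add (q3 l hl y) (r3 l hl y)
    _ ≤ C * (1 + |y|) ^ (N + M) + D * (1 + |y|) ^ (N + M) := by gcongr
    _ = _ := by ring

lemma Nice0.mul {U : Set ℝ} {q r : ℝ → ℝ → ℂ} (hq : Nice0 U q) (hr : Nice0 U r) :
    Nice0 U (fun l y => q l y * r l y) := by
  obtain ⟨q1, q2, C, N, hC, q3⟩ := hq
  obtain ⟨r1, r2, D, M, hD, r3⟩ := hr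
  refine ⟨fun y => (q1 y).mul (r1 y), fun l hl => (q2 l hl).mul (r2 l hl), C * D, N + M,
    by positivity, fun l hl y => ?_⟩
  calc ‖q l y * r l y‖ = ‖q l y‖ * ‖r l y‖ := norm_mul _ _
    _ ≤ (C * (1 + |y|) ^ N) * (D * (1 + |y|) ^ M) := by
        have := q3 l hl y
        have := r3 l hl y
        gcongr
    _ = _ := by ring

lemma Nice.add {U : Set ℝ} {n : ℕ} {q r : ℝ → ℝ → ℂ} (hq : Nice U n q) (hr : Nice U n r) :
    Nice U n (fun l y => q l y + r l y) := by
  induction n generalizing q r with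
  | zero => exact Nice0.add hq hr
  | succ n ih =>
    obtain ⟨q0, q', hq', hqn⟩ := hq
    obtain ⟨r0, r', hr', hrn⟩ := hr
    exact ⟨q0.add r0, _, fun l hl y => (hq' l hl y).add (hr' l hl y), ih hqn hrn⟩

lemma Nice.mul {U : Set ℝ} {n : ℕ} {q r : ℝ → ℝ → ℂ} (hq : Nice U n q) (hr : Nice U n r) :
    Nice U n (fun l y => q l y * r l y) := by
  induction n generalizing q r with
  | zero => exact Nice0.mul hq hr
  | succ n ih =>
    have hqp := hq.pred
    have hrp := hr.pred
    obtain ⟨q0, q', hq', hqn⟩ := hq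
    obtain ⟨r0, r', hr', hrn⟩ := hr
    exact ⟨q0.mul r0, _, fun l hl y => (hq' l hl y).mul (hr' l hl y),
      (ih hqn hrp).add (ih hqp hrn)⟩

lemma nice_zero (U : Set ℝ) (n : ℕ) : Nice U n (fun _ _ => 0) := by
  have h0 : Nice0 U (fun _ _ => 0) :=
    ⟨fun _ => continuousOn_const, fun _ _ => continuous_const, 0, 0, le_rfl, by simp⟩
  induction n with
  | zero => exact h0
  | succ n ih => exact ⟨h0, _, fun l _ y => hasDerivAt_const l (0:ℂ), ih⟩

lemma nice_of_y (U : Set ℝ) (n : ℕ) {h : ℝ → ℂ} (hc : Continuous h) {C : ℝ} {N : ℕ} (hC : 0 ≤ C)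
    (hb : ∀ y, ‖h y‖ ≤ C * (1 + |y|) ^ N) : Nice U n (fun _ y => h y) := by
  have h0 : Nice0 U (fun _ y => h y) :=
    ⟨fun _ => continuousOn_const, fun _ _ => hc, C, N, hC, fun _ _ y => hb y⟩
  cases n with
  | zero => exact h0
  | succ n => exact ⟨h0, _, fun l _ y => hasDerivAt_const l (h y), nice_zero U n⟩

lemma nice_const (U : Set ℝ) (n : ℕ) (c : ℂ) : Nice U n (fun _ _ => c) :=
  nice_of_y U n (C := ‖c‖) (N := 0) continuous_const (norm_nonneg _) (by simp)

lemma Nice.sub {U : Set ℝ} {n : ℕ} {q r : ℝ → ℝ → ℂ} (hq : Nice U n q) (hr : Nice U n r) :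
    Nice U n (fun l y => q l y - r l y) := by
  have := hq.add ((nice_const U n (-1)).mul hr)
  convert this using 3
  ring

lemma nice_of_contDiffOn {U V A : Set ℝ} (hV : IsOpen V) (hA : IsCompact A) (hUA : U ⊆ A)
    (hAV : A ⊆ V) (n : ℕ) {h : ℝ → ℂ} (hh : ContDiffOn ℝ n h V) :
    Nice U n (fun l _ => h l) := by
  have aux : ∀ h : ℝ → ℂ, ContinuousOn h V → Nice0 U (fun l _ => h l) := by
    intro h hc
    obtain ⟨C, hC⟩ := hA.exists_bound_of_continuousOn (hc.mono hAV)
    refine ⟨fun _ => hc.mono (hUA.trans hAV), fun _ _ => continuous_const, max C 0, 0,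
      le_max_right _ _, fun l hl y => ?_⟩
    simpa using Or.inl (hC l (hUA hl))
  induction n generalizing h with
  | zero => exact aux h hh.continuousOn
  | succ n ih =>
    have h1 := (contDiffOn_succ_iff_deriv_of_isOpen (n := n) hV).1 (by exact_mod_cast hh)
    refine ⟨aux h hh.continuousOn, fun l _ => deriv h l, fun l hl y => ?_, ih h1.2.2⟩
    exact (h1.1.differentiableAt (hV.mem_nhds (hAV (hUA hl)))).hasDerivAt

lemma nice_PhiK {K : Measure ℝ} (k n : ℕ) {a b : ℝ} (ha : a ≤ 0) (hb : 0 ≤ b)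
    (hG : ∀ k, Integrable (domK a b k) K) {U : Set ℝ} (hU : IsOpen U) {z : ℝ → ℂ}
    (hzc : Continuous z) (hz : ∀ lam ∈ U, ∀ y, a ≤ lam * (z y).re ∧ lam * (z y).re ≤ b)
    (hzn : ∀ n, Nice U n (fun _ y => z y)) :
    Nice U n (fun l y => PhiK K k l (z y)) := by
  have h0 : ∀ k, Nice0 U (fun l y => PhiK K k l (z y)) := by
    intro k
    refine ⟨fun y l hl => ?_, fun l hl => ?_, |∫ x, domK a b k x ∂K|, 0, abs_nonneg _, ?_⟩
    · exact (PhiK_hasDerivAt k ha hb hG hU (fun l hl => hz l hl y) hl).continuousAt.continuousWithinAt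
    · exact PhiK_continuous_line k ha hb hG hzc (hz l hl)
    · intro l hl y
      simpa using (norm_PhiK_le k ha hb hG (hz l hl y).1 (hz l hl y).2).trans (le_abs_self _)
  induction n generalizing k with
  | zero => exact h0 k
  | succ n ih =>
    exact ⟨h0 k, _, fun l hl y => PhiK_hasDerivAt k ha hb hG hU (fun l hl => hz l hl y) hl,
      (hzn n).mul (ih (k+1))⟩

lemma PhiK_contDiffOn {K : Measure ℝ} (k n : ℕ) {a b : ℝ} (ha : a ≤ 0) (hb : 0 ≤ b)
    (hG : ∀ k, Integrable (domK a b k) K) {V : Set ℝ} (hV : IsOpen V) {z : ℂ}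
    (hz : ∀ lam ∈ V, a ≤ lam * z.re ∧ lam * z.re ≤ b) :
    ContDiffOn ℝ n (fun l => PhiK K k l z) V := by
  induction n generalizing k with
  | zero =>
    refine contDiffOn_zero.2 fun l hl => ?_
    exact (PhiK_hasDerivAt k ha hb hG hV hz hl).continuousAt.continuousWithinAt
  | succ n ih =>
    have : ContDiffOn ℝ ((n:ℕ∞) + 1) (fun l => PhiK K k l z) V := by
      refine (contDiffOn_succ_iff_deriv_of_isOpen hV).2 ⟨fun l hl => ?_, by simp, ?_⟩
      · exact (PhiK_hasDerivAt k ha hb hG hV hz hl).differentiableAt.differentiableWithinAt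
      · refine ((contDiffOn_const (c := z)).mul (ih (k+1))).congr fun l hl => ?_
        exact (PhiK_hasDerivAt k ha hb hG hV hz hl).deriv
    exact_mod_cast this

lemma int_contDiffOn {U : Set ℝ} (hU : IsOpen U) {w : ℝ → ℂ} (hwc : Continuous w)
    (hw : ∀ N : ℕ, Integrable (fun y => (1 + |y|) ^ N * ‖w y‖)) {η : ℝ → ℝ → ℂ}
    (hη : ∀ n, Nice U n η) (τ : ℂ) {B : ℝ}
    (hB : ∀ l ∈ U, ∀ y, ‖Complex.exp (η l y * τ)‖ ≤ B) (n : ℕ) {q : ℝ → ℝ → ℂ}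
    (hq : Nice U n q) :
    ContDiffOn ℝ n (fun l => ∫ y, q l y * (Complex.exp (η l y * τ) * w y)) U := by
  have hηc : ∀ l ∈ U, Continuous (η l) := (hη 0).2.1
  have hmeas : ∀ q, Nice0 U q → ∀ l ∈ U,
      Continuous (fun y => q l y * (Complex.exp (η l y * τ) * w y)) := by
    intro q hq l hl
    have h1 := hηc l hl
    have h2 := hq.2.1 l hl
    fun_prop
  have hbd : ∀ q, Nice0 U q → ∃ (C : ℝ) (N : ℕ), 0 ≤ C ∧ ∀ l ∈ U, ∀ y,
      ‖q l y * (Complex.exp (η l y * τ) * w y)‖ ≤ C * ((1 + |y|) ^ N * ‖w y‖) := by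
    intro q hq
    obtain ⟨C, N, hC, h⟩ := hq.2.2
    refine ⟨C * |B|, N, by positivity, fun l hl y => ?_⟩
    rw [norm_mul, norm_mul]
    have h1 := h l hl y
    have h2 := (hB l hl y).trans (le_abs_self B)
    calc _ ≤ (C * (1 + |y|) ^ N) * (|B| * ‖w y‖) := by gcongr
      _ = _ := by ring
  induction n generalizing q with
  | zero =>
    refine contDiffOn_zero.2 ?_
    obtain ⟨C, N, hC, h⟩ := hbd q hq
    refine continuousOn_of_dominated (bound := fun y => C * ((1 + |y|) ^ N * ‖w y‖))
      (fun l hl => (hmeas q hq l hl).aestronglyMeasurable)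
      (fun l hl => Filter.Eventually.of_forall (h l hl)) ((hw N).const_mul C)
      (Filter.Eventually.of_forall fun y => ?_)
    have h1 := hq.1 y
    have h2 := (hη 0).1 y
    fun_prop
  | succ n ih =>
    have hqp := hq.pred
    obtain ⟨q0, q', hq', hqn⟩ := hq
    obtain ⟨η0, η', hη', hηn⟩ := hη (n+1)
    have hr : Nice U n (fun l y => q' l y + q l y * (η' l y * τ)) :=
      hqn.add (hqp.mul (hηn.mul (nice_const U n τ)))
    obtain ⟨C0, N0, hC0, b0⟩ := hbd q q0
    obtain ⟨C, N, hC, b⟩ := hbd _ hr.zero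
    have key : ∀ l ∈ U, HasDerivAt (fun l => ∫ y, q l y * (Complex.exp (η l y * τ) * w y))
        (∫ y, (q' l y + q l y * (η' l y * τ)) * (Complex.exp (η l y * τ) * w y)) l := by
      intro l hl
      refine (hasDerivAt_integral_of_dominated_loc_of_deriv_le
        (F := fun l y => q l y * (Complex.exp (η l y * τ) * w y))
        (F' := fun l y => (q' l y + q l y * (η' l y * τ)) * (Complex.exp (η l y * τ) * w y))
        (s := U) (bound := fun y => C * ((1 + |y|) ^ N * ‖w y‖))
        (hU.mem_nhds hl) ?_ ?_ ?_ ?_ ?_ ?_).2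
      · filter_upwards [hU.mem_nhds hl] with l hl
        exact (hmeas q q0 l hl).aestronglyMeasurable
      · exact ((hw N0).const_mul C0).mono' (hmeas q q0 l hl).aestronglyMeasurable
          (Filter.Eventually.of_forall (b0 l hl))
      · exact (hmeas _ hr.zero l hl).aestronglyMeasurable
      · exact Filter.Eventually.of_forall fun y l hl => b l hl y
      · exact (hw N).const_mul C
      · refine Filter.Eventually.of_forall fun y l hl => ?_
        refine ((hq' l hl y).mul ((((hη' l hl y).mul_const τ).cexp).mul_const (w y))).congr_deriv ?_
        ring
    have : ContDiffOn ℝ ((n:ℕ∞) + 1) (fun l => ∫ y, q l y * (Complex.exp (η l y * τ) * w y)) U := by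
      refine (contDiffOn_succ_iff_deriv_of_isOpen hU).2 ⟨fun l hl => ?_, by simp, ?_⟩
      · exact (key l hl).differentiableAt.differentiableWithinAt
      · exact (ih hr).congr fun l hl => (key l hl).deriv
    exact_mod_cast this

/-! ### the cumulant function -/

lemma kappa_eq (μ c : ℝ) (K : Measure ℝ) (lam : ℝ) (z : ℂ) :
    kappa μ c K lam z = (μ:ℂ) * z + (c:ℂ) / 2 * z ^ 2 + z ^ 2 * PhiK K 0 lam z := by
  unfold kappa PhiK
  split_ifs with h
  · subst h
    have h1 : ∀ x : ℝ, (x:ℂ) ^ (0 + 2) * phiK 0 (((0:ℝ):ℂ) * z * (x:ℂ)) = (((x ^ 2 : ℝ)) : ℂ) * (1 / 2) := by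
      intro x
      simp [phiK_zero_zero]
    simp_rw [h1]
    rw [integral_mul_const, integral_complex_ofReal]
    push_cast
    ring
  · have hl : (lam:ℂ) ≠ 0 := by exact_mod_cast h
    congr 1
    rw [← integral_const_mul, ← integral_const_mul]
    congr 1
    ext x
    rw [← sq_mul_phiK_zero]
    field_simp
    ring

noncomputable def Ifun (lam : ℝ) (z : ℂ) (x : ℝ) : ℂ :=
  Complex.exp ((lam : ℂ) * z * (x : ℂ)) - 1 - (lam : ℂ) * z * (x : ℂ)

lemma Ifun_integrable {K : Measure ℝ} {a b : ℝ} (ha : a ≤ 0) (hb : 0 ≤ b)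
    (hG : ∀ k, Integrable (domK a b k) K) {lam : ℝ} {z : ℂ}
    (h1 : a ≤ lam * z.re) (h2 : lam * z.re ≤ b) :
    Integrable (Ifun lam z) K := by
  refine ((integrand_integrable 0 ha hb hG h1 h2).const_mul (((lam:ℂ) * z) ^ 2)).congr ?_
  refine Filter.Eventually.of_forall fun x => ?_
  simp only [Ifun]
  rw [← sq_mul_phiK_zero]
  ring

lemma kappa_ne_zero_eq (μ c : ℝ) (K : Measure ℝ) {lam : ℝ} (h : lam ≠ 0) (z : ℂ) :
    kappa μ c K lam z = (μ:ℂ) * z + (c:ℂ) / 2 * z ^ 2 + (((lam ^ 2)⁻¹ : ℝ) : ℂ) * ∫ x, Ifun lam z x ∂K := by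
  unfold kappa Ifun
  rw [if_neg h]
  push_cast
  rfl

lemma denom_pos (μ c : ℝ) (hc : 0 ≤ c) (K : Measure ℝ) (hK0 : K {0} = 0)
    (hσ : 0 < c + ∫ x : ℝ, x ^ 2 ∂K) {a b : ℝ} (ha : a ≤ 0) (hb : 0 ≤ b)
    (hG : ∀ k, Integrable (domK a b k) K) {lam : ℝ}
    (h1 : a ≤ lam * 1 ∧ lam * 1 ≤ b) (h2 : a ≤ lam * 2 ∧ lam * 2 ≤ b) :
    kappa μ c K lam 2 - 2 * kappa μ c K lam 1 ≠ 0 := by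
  by_cases h : lam = 0
  · have : kappa μ c K lam 2 - 2 * kappa μ c K lam 1 = ((c + ∫ x : ℝ, x ^ 2 ∂K : ℝ) : ℂ) := by
      simp only [kappa, if_pos h]
      ring
    rw [this]
    exact_mod_cast hσ.ne'
  · have i1 : Integrable (Ifun lam 1) K := Ifun_integrable ha hb hG (by simpa using h1.1) (by simpa using h1.2)
    have i2 : Integrable (Ifun lam 2) K := Ifun_integrable ha hb hG (by simpa using h2.1) (by simpa using h2.2)
    have hp : ∀ x : ℝ, Ifun lam 2 x - 2 * Ifun lam 1 x = (((Real.exp (lam * x) - 1) ^ 2 : ℝ) : ℂ) := by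
      intro x
      have : Complex.exp ((lam:ℂ) * 2 * x) = Complex.exp ((lam:ℂ) * x) ^ 2 := by
        rw [← Complex.exp_nat_mul]; congr 1; push_cast; ring
      simp only [Ifun]
      rw [this]
      push_cast
      rw [mul_one]
      ring
    have hint : Integrable (fun x : ℝ => (Real.exp (lam * x) - 1) ^ 2) K := by
      have := (i2.sub (i1.const_mul 2)).re
      refine this.congr (Filter.Eventually.of_forall fun x => ?_)
      simp only [Pi.sub_apply, hp x]
      exact RCLike.ofReal_re (K := ℂ) _
    have e : kappa μ c K lam 2 - 2 * kappa μ c K lam 1 =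
        ((c + (lam ^ 2)⁻¹ * ∫ x : ℝ, (Real.exp (lam * x) - 1) ^ 2 ∂K : ℝ) : ℂ) := by
      rw [kappa_ne_zero_eq μ c K h, kappa_ne_zero_eq μ c K h]
      have : ∫ x, Ifun lam 2 x ∂K - 2 * ∫ x, Ifun lam 1 x ∂K
          = ((∫ x : ℝ, (Real.exp (lam * x) - 1) ^ 2 ∂K : ℝ) : ℂ) := by
        rw [← integral_complex_ofReal, ← integral_const_mul, ← integral_sub i2 (i1.const_mul 2)]
        simp_rw [hp]
      rw [Complex.ofReal_add, Complex.ofReal_mul, ← this]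
      ring
    rw [e]
    have hl2 : 0 < (lam ^ 2)⁻¹ := by positivity
    have hnn : 0 ≤ ∫ x : ℝ, (Real.exp (lam * x) - 1) ^ 2 ∂K := integral_nonneg fun x => sq_nonneg _
    have : 0 < c + (lam ^ 2)⁻¹ * ∫ x : ℝ, (Real.exp (lam * x) - 1) ^ 2 ∂K := by
      rcases hc.lt_or_eq with hc | hc
      · positivity
      · have : 0 < ∫ x : ℝ, (Real.exp (lam * x) - 1) ^ 2 ∂K := by
          rw [integral_pos_iff_support_of_nonneg (fun x => sq_nonneg _) hint, pos_iff_ne_zero]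
          intro h0
          have hs : Function.support (fun x : ℝ => (Real.exp (lam * x) - 1) ^ 2) = {0}ᶜ := by
            ext x
            simp [sub_eq_zero, h]
          rw [hs] at h0
          have hK : K = 0 := by
            rw [← Measure.measure_univ_eq_zero, ← Set.union_compl_self {(0:ℝ)}]
            exact measure_union_null hK0 h0
          rw [hK, ← hc] at hσ
          simp at hσ
        positivity
    exact_mod_cast this.ne'

lemma re_eta_le (μ c : ℝ) (hc : 0 ≤ c) (K : Measure ℝ)
    {a b : ℝ} (ha : a ≤ 0) (hb : 0 ≤ b)
    (hG : ∀ k, Integrable (domK a b k) K) {lam : ℝ} {z Λ : ℂ}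
    (h1 : a ≤ lam * 1 ∧ lam * 1 ≤ b) (h2 : a ≤ lam * 2 ∧ lam * 2 ≤ b)
    (hz : a ≤ lam * z.re ∧ lam * z.re ≤ b)
    (hz1 : a ≤ lam * (z.re + 1) ∧ lam * (z.re + 1) ≤ b)
    (hz2 : a ≤ lam * (2 * z.re) ∧ lam * (2 * z.re) ≤ b) :
    (kappa μ c K lam z - Λ * (kappa μ c K lam (z + 1) - kappa μ c K lam z - kappa μ c K lam 1)).re ≤
      (kappa μ c K lam ((2 * z.re : ℝ) : ℂ)).re / 2 +
        Complex.normSq Λ / 2 * (kappa μ c K lam 2 - 2 * kappa μ c K lam 1).re := by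
  have hpoly : ∀ d : ℝ, 0 ≤ d → ((μ * z + d / 2 * z ^ 2 : ℂ) - Λ * ((μ * (z + 1) + d / 2 * (z + 1) ^ 2)
        - (μ * z + d / 2 * z ^ 2) - (μ * 1 + d / 2 * 1 ^ 2))).re ≤
      (μ * ((2 * z.re : ℝ) : ℂ) + d / 2 * ((2 * z.re : ℝ) : ℂ) ^ 2 : ℂ).re / 2 +
        Complex.normSq Λ / 2 * ((μ * 2 + d / 2 * 2 ^ 2 : ℂ) - 2 * (μ * 1 + d / 2 * 1 ^ 2)).re := by
    intro d hd
    have e1 : ((μ * z + d / 2 * z ^ 2 : ℂ) - Λ * ((μ * (z + 1) + d / 2 * (z + 1) ^ 2)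
        - (μ * z + d / 2 * z ^ 2) - (μ * 1 + d / 2 * 1 ^ 2))) = 
        μ * z + ((d / 2 : ℝ) : ℂ) * (z * z) - (d : ℂ) * (Λ * z) := by push_cast; ring
    have e2 : (μ * ((2 * z.re : ℝ) : ℂ) + d / 2 * ((2 * z.re : ℝ) : ℂ) ^ 2 : ℂ) = 
      ((μ * (2 * z.re) + d / 2 * (2 * z.re) ^ 2 : ℝ) : ℂ) := by push_cast; ring
    have e3 : ((μ * 2 + d / 2 * 2 ^ 2 : ℂ) - 2 * (μ * 1 + d / 2 * 1 ^ 2)) = (d : ℂ) := by ring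
    rw [e1, e2, e3, Complex.ofReal_re, Complex.ofReal_re]
    simp only [Complex.add_re, Complex.sub_re, Complex.mul_re, Complex.normSq_apply,
      Complex.ofReal_re, Complex.ofReal_im, zero_mul, sub_zero]
    have : 0 ≤ d / 2 * ((z.re + Λ.re) ^ 2 + (z.im - Λ.im) ^ 2) := by positivity
    nlinarith
  by_cases h : lam = 0
  · simp only [kappa, if_pos h]
    exact hpoly _ (add_nonneg hc (integral_nonneg fun x => sq_nonneg x))
  · have i1 : Integrable (Ifun lam 1) K := Ifun_integrable ha hb hG (by simpa using h1.1) (by simpa using h1.2)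
    have i2 : Integrable (Ifun lam 2) K := Ifun_integrable ha hb hG (by simpa using h2.1) (by simpa using h2.2)
    have iz : Integrable (Ifun lam z) K := Ifun_integrable ha hb hG hz.1 hz.2
    have iz1 : Integrable (Ifun lam (z + 1)) K :=
      Ifun_integrable ha hb hG (by simpa using hz1.1) (by simpa using hz1.2)
    have iz2 : Integrable (Ifun lam ((2 * z.re : ℝ) : ℂ)) K :=
      Ifun_integrable ha hb hG (by rw [Complex.ofReal_re]; exact hz2.1)
        (by rw [Complex.ofReal_re]; exact hz2.2)
    have iJ1 := ((iz1.sub iz).sub i1).const_mul (2 * Λ)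
    have iJ2 := (i2.sub (i1.const_mul 2)).const_mul (Complex.normSq Λ : ℂ)
    have iJ0 := iz2.sub (iz.const_mul 2)
    have hJ : 0 ≤ (∫ x, ((Ifun lam ((2 * z.re : ℝ) : ℂ) x - 2 * Ifun lam z x) +
        (2 * Λ) * (Ifun lam (z + 1) x - Ifun lam z x - Ifun lam 1 x) +
        (Complex.normSq Λ : ℂ) * (Ifun lam 2 x - 2 * Ifun lam 1 x)) ∂K).re := by
      have hre := integral_re ((iJ0.add iJ1).add iJ2)
      refine le_of_le_of_eq ?_ hre
      refine integral_nonneg fun x => ?_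
      simp only [Ifun, Pi.add_apply, Pi.sub_apply]
      have e2 : Complex.exp ((lam:ℂ) * 2 * x) = ((Real.exp (lam * x) ^ 2 : ℝ) : ℂ) := by
        rw [← Real.exp_nat_mul, Complex.ofReal_exp]; congr 1; push_cast; ring
      have e1 : Complex.exp ((lam:ℂ) * 1 * x) = ((Real.exp (lam * x) : ℝ) : ℂ) := by
        rw [Complex.ofReal_exp]; congr 1; push_cast; ring
      have ez1 : Complex.exp ((lam:ℂ) * (z + 1) * x) =
          Complex.exp ((lam:ℂ) * z * x) * ((Real.exp (lam * x) : ℝ) : ℂ) := by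
        rw [Complex.ofReal_exp, ← Complex.exp_add]; congr 1; push_cast; ring
      have ez2 : Complex.exp ((lam:ℂ) * ((2 * z.re : ℝ) : ℂ) * x) =
          (Complex.normSq (Complex.exp ((lam:ℂ) * z * x)) : ℂ) := by
        rw [← Complex.mul_conj, ← Complex.exp_conj, ← Complex.exp_add]
        congr 1
        simp only [map_mul, Complex.conj_ofReal]
        rw [← Complex.add_conj]
        ring
      rw [e2, e1, ez1, ez2]
      generalize Complex.exp ((lam:ℂ) * z * x) = A
      generalize Real.exp (lam * x) = E
      have : (((Complex.normSq A : ℂ) - 1 - (lam:ℂ) * ((2 * z.re : ℝ) : ℂ) * x - 2 * (A - 1 - lam * z * x)) +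
        2 * Λ * (A * E - 1 - lam * (z + 1) * x - (A - 1 - lam * z * x) - (E - 1 - lam * 1 * x)) +
        (Complex.normSq Λ : ℂ) * (((E ^ 2 : ℝ) : ℂ) - 1 - lam * 2 * x - 2 * (E - 1 - lam * 1 * x))) =
        (((Complex.normSq A + 1 + Complex.normSq Λ * (E - 1) ^ 2 : ℝ) : ℂ)
          - ((lam * x : ℝ) : ℂ) * (((2 * z.re : ℝ) : ℂ) - (2 : ℝ) * z)) - ((2 : ℝ) : ℂ) * A
          + ((2 * (E - 1) : ℝ) : ℂ) * (Λ * (A - 1)) := by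
        push_cast; ring
      rw [this]
      rw [Pi.zero_apply, RCLike.re_eq_complex_re]
      simp only [Complex.add_re, Complex.sub_re, Complex.ofReal_re, Complex.ofReal_im, zero_mul,
        Complex.mul_re, Complex.normSq_apply, Complex.sub_im, Complex.one_re, Complex.one_im, sub_zero]
      have : 0 ≤ (A.re - 1 + Λ.re * (E - 1)) ^ 2 + (A.im - Λ.im * (E - 1)) ^ 2 := by positivity
      nlinarith
    have hsplit : (∫ x, ((Ifun lam ((2 * z.re : ℝ) : ℂ) x - 2 * Ifun lam z x) +
        (2 * Λ) * (Ifun lam (z + 1) x - Ifun lam z x - Ifun lam 1 x) +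
        (Complex.normSq Λ : ℂ) * (Ifun lam 2 x - 2 * Ifun lam 1 x)) ∂K) =
        (∫ x, Ifun lam ((2 * z.re : ℝ) : ℂ) x ∂K - 2 * ∫ x, Ifun lam z x ∂K) +
        (2 * Λ) * (∫ x, Ifun lam (z + 1) x ∂K - ∫ x, Ifun lam z x ∂K - ∫ x, Ifun lam 1 x ∂K) +
        (Complex.normSq Λ : ℂ) * (∫ x, Ifun lam 2 x ∂K - 2 * ∫ x, Ifun lam 1 x ∂K) := by
      have iA : Integrable (fun x => Ifun lam (z + 1) x - Ifun lam z x) K := iz1.sub iz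
      have iB : Integrable (fun x => (2 * Λ) * (Ifun lam (z + 1) x - Ifun lam z x - Ifun lam 1 x)) K := iJ1
      have iC : Integrable (fun x => (Complex.normSq Λ : ℂ) * (Ifun lam 2 x - 2 * Ifun lam 1 x)) K := iJ2
      have iD : Integrable (fun x => Ifun lam ((2 * z.re : ℝ) : ℂ) x - 2 * Ifun lam z x) K := iJ0
      have iE : Integrable (fun x => Ifun lam ((2 * z.re : ℝ) : ℂ) x - 2 * Ifun lam z x +
        (2 * Λ) * (Ifun lam (z + 1) x - Ifun lam z x - Ifun lam 1 x)) K := iD.add iB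
      rw [integral_add iE iC, integral_add iD iB, integral_const_mul, integral_const_mul,
        integral_sub iA i1, integral_sub iz1 iz, integral_sub iz2 (iz.const_mul 2),
        integral_sub i2 (i1.const_mul 2), integral_const_mul, integral_const_mul]
    rw [hsplit] at hJ
    have hp := hpoly c hc
    simp only [kappa_ne_zero_eq μ c K h]
    have hm : 0 ≤ (lam ^ 2)⁻¹ := by positivity
    generalize (lam ^ 2)⁻¹ = m at *
    generalize ∫ x, Ifun lam ((2 * z.re : ℝ) : ℂ) x ∂K = I2z at *
    generalize ∫ x, Ifun lam z x ∂K = Iz at *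
    generalize ∫ x, Ifun lam (z + 1) x ∂K = Iz1 at *
    generalize ∫ x, Ifun lam 1 x ∂K = I1 at *
    generalize ∫ x, Ifun lam 2 x ∂K = I2 at *
    have hJ' := mul_nonneg hm hJ
    generalize (μ * z + c / 2 * z ^ 2 : ℂ) = P1 at *
    generalize (μ * (z + 1) + c / 2 * (z + 1) ^ 2 : ℂ) = P2 at *
    generalize (μ * ((2 * z.re : ℝ) : ℂ) + c / 2 * ((2 * z.re : ℝ) : ℂ) ^ 2 : ℂ) = P3 at *
    generalize (μ * 1 + c / 2 * 1 ^ 2 : ℂ) = P4 at *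
    generalize (μ * 2 + c / 2 * 2 ^ 2 : ℂ) = P5 at *
    generalize Complex.normSq Λ = nn at *
    simp only [Complex.add_re, Complex.sub_re, Complex.mul_re, Complex.mul_im, Complex.ofReal_re,
      Complex.ofReal_im, Complex.sub_im, Complex.add_im, Complex.re_ofNat, Complex.im_ofNat] at hJ' hp ⊢
    nlinarith

/-! ### integrability of the dominating functions -/

lemma domK_integrable (K : Measure ℝ)
    (hKmin : ∫⁻ x : ℝ, ENNReal.ofReal (min 1 (x ^ 2)) ∂K ≠ ⊤) {a b a' b' : ℝ}
    (hKexp : ∀ s ∈ Set.Ioo a b,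
      ∫⁻ x in {x : ℝ | 1 ≤ |x|}, ENNReal.ofReal (Real.exp (s * x)) ∂K ≠ ⊤)
    (haa : a < a') (ha : a' ≤ 0) (hb : 0 ≤ b') (hbb : b' < b) (k : ℕ) :
    Integrable (domK a' b' k) K := by
  have hcont : Continuous (domK a' b' k) := by unfold domK; fun_prop
  have hS : MeasurableSet {x : ℝ | 1 ≤ |x|} := measurableSet_le measurable_const measurable_id.abs
  have hE : ∀ s ∈ Set.Ioo a b, IntegrableOn (fun x => Real.exp (s * x)) {x : ℝ | 1 ≤ |x|} K := by
    intro s hs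
    refine ⟨(by fun_prop : Continuous fun x : ℝ => Real.exp (s * x)).aestronglyMeasurable, ?_⟩
    rw [hasFiniteIntegral_iff_ofReal (Filter.Eventually.of_forall fun x => (Real.exp_pos _).le)]
    exact (hKexp s hs).lt_top
  have hM : Integrable (fun x : ℝ => min 1 (x ^ 2)) K := by
    refine ⟨(by fun_prop : Continuous fun x : ℝ => min 1 (x ^ 2)).aestronglyMeasurable, ?_⟩
    rw [hasFiniteIntegral_iff_ofReal (Filter.Eventually.of_forall fun x => le_min zero_le_one (sq_nonneg x))]
    exact hKmin.lt_top
  rw [← integrableOn_univ, ← Set.union_compl_self {x : ℝ | 1 ≤ |x|}]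
  refine IntegrableOn.union ?_ ?_
  · obtain ⟨δ, hδ, hδ1, hδ2⟩ : ∃ δ > 0, δ < a' - a ∧ δ < b - b' := by
      refine ⟨min (a' - a) (b - b') / 2, ?_, ?_, ?_⟩
      · have : 0 < min (a' - a) (b - b') := lt_min (by linarith) (by linarith)
        linarith
      · have : 0 < min (a' - a) (b - b') := lt_min (by linarith) (by linarith)
        have := min_le_left (a' - a) (b - b')
        linarith
      · have : 0 < min (a' - a) (b - b') := lt_min (by linarith) (by linarith)
        have := min_le_right (a' - a) (b - b')
        linarith
    have i1 := hE (a' + δ) ⟨by linarith, by linarith⟩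
    have i2 := hE (a' - δ) ⟨by linarith, by linarith⟩
    have i3 := hE (b' + δ) ⟨by linarith, by linarith⟩
    have i4 := hE (b' - δ) ⟨by linarith, by linarith⟩
    refine (((i1.add i2).add (i3.add i4)).const_mul ((k+2).factorial / δ ^ (k+2) : ℝ)).mono'
      hcont.aestronglyMeasurable (Filter.Eventually.of_forall fun x => ?_)
    have hp := Real.pow_div_factorial_le_exp (x := δ * |x|) (by positivity) (k+2)
    have hq : Real.exp (δ * |x|) ≤ Real.exp (δ * x) + Real.exp (-δ * x) := by
      rcases abs_choice x with h | h
      · rw [h]; linarith [Real.exp_pos (-δ * x)]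
      · rw [h, show δ * -x = -δ * x by ring]; linarith [Real.exp_pos (δ * x)]
    have hr : |x| ^ (k+2) ≤ ((k+2).factorial / δ ^ (k+2) : ℝ) * (Real.exp (δ * x) + Real.exp (-δ * x)) := by
      have hf : (0:ℝ) < (k+2).factorial := by exact_mod_cast Nat.factorial_pos _
      rw [mul_pow, div_le_iff₀ hf] at hp
      rw [div_mul_eq_mul_div, le_div_iff₀ (by positivity)]
      nlinarith
    have hpos : 0 ≤ Real.exp (a' * x) + Real.exp (b' * x) := by positivity
    rw [Real.norm_eq_abs, domK, abs_of_nonneg (by positivity)]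
    refine (mul_le_mul_of_nonneg_right hr hpos).trans (le_of_eq ?_)
    simp only [Pi.add_apply]
    rw [show (a' + δ) * x = a' * x + δ * x by ring, show (a' - δ) * x = a' * x + -δ * x by ring,
      show (b' + δ) * x = b' * x + δ * x by ring, show (b' - δ) * x = b' * x + -δ * x by ring]
    simp only [Real.exp_add]
    ring
  · refine ((hM.const_mul (Real.exp (-a') + Real.exp b')).integrableOn).mono'
      hcont.aestronglyMeasurable ?_
    refine (ae_restrict_iff' hS.compl).2 (Filter.Eventually.of_forall fun x hx => ?_)
    have hx1 : |x| < 1 := by simpa using hx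
    have hx2 := abs_lt.1 hx1
    rw [Real.norm_eq_abs, domK, abs_of_nonneg (by positivity)]
    have hxx : x ^ 2 ≤ 1 := by nlinarith
    rw [min_eq_right hxx, mul_comm]
    have e1 : Real.exp (a' * x) ≤ Real.exp (-a') := Real.exp_le_exp.2 (by nlinarith)
    have e2 : Real.exp (b' * x) ≤ Real.exp b' := Real.exp_le_exp.2 (by nlinarith)
    have e3 : |x| ^ (k + 2) ≤ x ^ 2 := by
      rw [pow_add, sq_abs]
      have := pow_le_one₀ (n := k) (abs_nonneg x) hx1.le
      nlinarith [sq_nonneg x]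
    gcongr

/-! ### decay of the Fourier transform -/

lemma lhat_eq (l : ℝ → ℝ) (y : ℝ) :
    lhat l y = FourierTransform.fourier (fun x : ℝ => (l x : ℂ)) (y / (2 * Real.pi)) := by
  rw [Real.fourier_real_eq_integral_exp_smul]
  unfold lhat
  congr 1
  ext x
  rw [smul_eq_mul, mul_comm]
  congr 2
  have : (Real.pi : ℂ) ≠ 0 := by exact_mod_cast Real.pi_ne_zero
  push_cast
  field_simp

lemma iteratedDeriv_ofReal_comp {l : ℝ → ℝ} (hl : ContDiff ℝ (⊤ : ℕ∞) l) (n : ℕ) :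
    iteratedDeriv n (fun x : ℝ => (l x : ℂ)) = fun x => ((iteratedDeriv n l x : ℝ) : ℂ) := by
  ext x
  simp only [iteratedDeriv]
  have := Complex.ofRealCLM.iteratedFDeriv_comp_left (f := l) (x := x) (n := (⊤ : ℕ∞)) (i := n) hl.contDiffAt
    (by exact_mod_cast le_top)
  have h2 : (fun x : ℝ => (l x : ℂ)) = Complex.ofRealCLM ∘ l := rfl
  rw [h2, this]
  rfl

lemma lhat_continuous {l : ℝ → ℝ} (hl : Integrable l) : Continuous (lhat l) := by
  refine continuous_of_dominated (bound := fun x => ‖l x‖) (fun y => ?_) (fun y => ?_) hl.norm ?_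
  · exact (hl.ofReal (𝕜 := ℂ)).aestronglyMeasurable.mul
      (by fun_prop : Continuous fun x : ℝ =>
        Complex.exp (-(Complex.I * (x : ℂ) * (y : ℂ)))).aestronglyMeasurable
  · refine Filter.Eventually.of_forall fun x => ?_
    rw [norm_mul, Complex.norm_exp]
    simp
  · exact Filter.Eventually.of_forall fun x => by fun_prop

lemma lhat_decay {l : ℝ → ℝ} (hl : ContDiff ℝ (⊤ : ℕ∞) l)
    (hlint : ∀ n : ℕ, Integrable (iteratedDeriv n l)) (n : ℕ) :
    ∃ C : ℝ, ∀ y, |y| ^ n * ‖lhat l y‖ ≤ C := by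
  refine ⟨∫ x, ‖iteratedDeriv n l x‖, fun y => ?_⟩
  have hc : ContDiff ℝ (⊤ : ℕ∞) (fun x : ℝ => (l x : ℂ)) := Complex.ofRealCLM.contDiff.comp hl
  have h := congrFun (Real.fourier_iteratedDeriv (n := n) (N := ⊤) hc (fun m _ => by
    rw [iteratedDeriv_ofReal_comp hl]
    exact (hlint m).ofReal) le_top) (y / (2 * Real.pi))
  have hpi : (Real.pi : ℂ) ≠ 0 := by exact_mod_cast Real.pi_ne_zero
  have e : (2 * (Real.pi:ℂ) * Complex.I * ((y / (2 * Real.pi) : ℝ) : ℂ)) = Complex.I * y := by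
    push_cast
    field_simp
  rw [← lhat_eq, e] at h
  have h2 := congrArg norm h
  rw [norm_smul, norm_pow, norm_mul, Complex.norm_I, one_mul, Complex.norm_real, Real.norm_eq_abs] at h2
  rw [← h2, Real.fourier_real_eq, iteratedDeriv_ofReal_comp hl]
  refine (norm_integral_le_integral_norm _).trans (le_of_eq ?_)
  congr 1
  ext x
  rw [Circle.norm_smul, Complex.norm_real]

lemma weight_integrable {l : ℝ → ℝ} (hl : ContDiff ℝ (⊤ : ℕ∞) l)
    (hlint : ∀ n : ℕ, Integrable (iteratedDeriv n l)) (N : ℕ) :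
    Integrable (fun y => (1 + |y|) ^ N * ‖lhat l y‖) := by
  obtain ⟨C0, h0⟩ := lhat_decay hl hlint 0
  obtain ⟨C1, h1⟩ := lhat_decay hl hlint (N + 2)
  have hli : Integrable l := by simpa using hlint 0
  have hc := lhat_continuous hli
  refine (integrable_inv_one_add_sq.const_mul (2 ^ (N + 1) * (C0 + C1))).mono'
    (by fun_prop : Continuous fun y : ℝ => (1 + |y|) ^ N * ‖lhat l y‖).aestronglyMeasurable
    (Filter.Eventually.of_forall fun y => ?_)
  rw [Real.norm_eq_abs, abs_of_nonneg (by positivity), ← div_eq_mul_inv, le_div_iff₀ (by positivity)]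
  have hq : (1 + |y|) ^ (N + 2) ≤ 2 ^ (N + 1) * (1 ^ (N+2) + |y| ^ (N + 2)) :=
    add_pow_le zero_le_one (abs_nonneg y) (N + 2)
  have hy : 1 + y ^ 2 ≤ (1 + |y|) ^ 2 := by nlinarith [sq_abs y, abs_nonneg y]
  calc (1 + |y|) ^ N * ‖lhat l y‖ * (1 + y ^ 2) ≤ (1 + |y|) ^ N * ‖lhat l y‖ * (1 + |y|) ^ 2 := by gcongr
    _ = (1 + |y|) ^ (N + 2) * ‖lhat l y‖ := by ring
    _ ≤ 2 ^ (N + 1) * (1 ^ (N+2) + |y| ^ (N + 2)) * ‖lhat l y‖ := by gcongr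
    _ = 2 ^ (N + 1) * (|y| ^ 0 * ‖lhat l y‖ + |y| ^ (N + 2) * ‖lhat l y‖) := by
        rw [one_pow, pow_zero]; ring
    _ ≤ 2 ^ (N + 1) * (C0 + C1) := by
        have := h0 y
        have := h1 y
        gcongr

/-! ### product rule -/

lemma leibniz_aux {L h1 h2 χ : ℝ → ℂ} {g s : ℂ} {S : Set ℝ} (hS : UniqueDiffOn ℝ S) (h0 : (0:ℝ) ∈ S)
    (hL : ContDiffOn ℝ 2 L S) (hh1 : ContDiffOn ℝ 2 h1 S) (hh2 : ContDiffOn ℝ 2 h2 S)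
    (hχ : ∀ lam, χ lam = L lam / s * (h1 lam - h2 lam - g)) :
    ContDiffOn ℝ 2 χ S ∧
    iteratedDerivWithin 1 χ S 0 = iteratedDerivWithin 1 L S 0 / s * (h1 0 - h2 0 - g) +
      L 0 / s * (iteratedDerivWithin 1 h1 S 0 - iteratedDerivWithin 1 h2 S 0) ∧
    iteratedDerivWithin 2 χ S 0 = iteratedDerivWithin 2 L S 0 / s * (h1 0 - h2 0 - g) +
      2 * (iteratedDerivWithin 1 L S 0 / s) * (iteratedDerivWithin 1 h1 S 0 - iteratedDerivWithin 1 h2 S 0) +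
      L 0 / s * (iteratedDerivWithin 2 h1 S 0 - iteratedDerivWithin 2 h2 S 0) := by
  have e : χ = (fun l => L l * s⁻¹) * ((h1 - h2) - fun _ => g) := by
    ext l
    simp [hχ, div_eq_mul_inv]
  have cL : ContDiffOn ℝ 2 (fun l => L l * s⁻¹) S := hL.mul contDiffOn_const
  have cH : ContDiffOn ℝ 2 ((h1 - h2) - fun _ => g) S := (hh1.sub hh2).sub contDiffOn_const
  have dL : ∀ n : ℕ, iteratedDerivWithin n (fun l => L l * s⁻¹) S 0
      = iteratedDerivWithin n L S 0 * s⁻¹ := by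
    intro n
    exact iteratedDerivWithin_mul_const_field _ _
  have dH : ∀ n : ℕ, 1 ≤ n → n ≤ 2 → iteratedDerivWithin n ((h1 - h2) - fun _ => g) S 0
      = iteratedDerivWithin n h1 S 0 - iteratedDerivWithin n h2 S 0 := by
    intro n hn hn2
    have hn2' : (n : WithTop ℕ∞) ≤ 2 := by exact_mod_cast hn2
    have a1 := (hh1 0 h0).of_le hn2'
    have a2 := (hh2 0 h0).of_le hn2'
    have a3 : ContDiffWithinAt ℝ n (h1 - h2) S 0 := a1.sub a2
    have a4 : ContDiffWithinAt ℝ n (fun _ : ℝ => g) S 0 := contDiffWithinAt_const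
    rw [iteratedDerivWithin_sub h0 hS a3 a4,
      iteratedDerivWithin_sub h0 hS a1 a2, iteratedDerivWithin_const]
    simp [show n ≠ 0 by omega]
  refine ⟨e ▸ cL.mul cH, ?_, ?_⟩
  · rw [e, iteratedDerivWithin_mul h0 hS ((cL 0 h0).of_le (by norm_num)) ((cH 0 h0).of_le (by norm_num))]
    simp only [Finset.sum_range_succ, Finset.sum_range_zero, dL]
    simp only [Nat.sub_zero, Nat.sub_self, dH 1 le_rfl (by norm_num), iteratedDerivWithin_zero,
      Pi.sub_apply]
    simp
    ring
  · rw [e, iteratedDerivWithin_mul h0 hS (cL 0 h0) (cH 0 h0)]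
    simp only [Finset.sum_range_succ, Finset.sum_range_zero, dL]
    simp only [Nat.sub_zero, Nat.sub_self, show 2 - 1 = 1 from rfl, dH 1 le_rfl (by norm_num),
      dH 2 (by norm_num) le_rfl, iteratedDerivWithin_zero, Pi.sub_apply]
    simp
    ring

lemma eta_eq (μ c : ℝ) (K : Measure ℝ) (lam : ℝ) (z : ℂ) :
    etaLK μ c K lam z = kappa μ c K lam z -
      LamMV μ c K lam * (kappa μ c K lam (z + 1) - kappa μ c K lam z - kappa μ c K lam 1) := by
  unfold etaLK gamLK kbar LamMV
  rw [show (1:ℂ) + 1 = 2 by norm_num, show kappa μ c K lam 2 - kappa μ c K lam 1 - kappa μ c K lam 1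
    = kappa μ c K lam 2 - 2 * kappa μ c K lam 1 by ring]
  ring

lemma eta_zero (μ c : ℝ) (K : Measure ℝ) (hσ : 0 < c + ∫ x : ℝ, x ^ 2 ∂K) (z : ℂ) :
    etaLK μ c K 0 z = (((c + ∫ x : ℝ, x ^ 2 ∂K) : ℝ) : ℂ) / 2 * z * (z - 1) := by
  have h : (((c + ∫ x : ℝ, x ^ 2 ∂K) : ℝ) : ℂ) ≠ 0 := by exact_mod_cast hσ.ne'
  rw [eta_eq]
  unfold LamMV
  simp only [kappa, if_true]
  generalize (((c + ∫ x : ℝ, x ^ 2 ∂K) : ℝ) : ℂ) = v at *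
  rw [show (μ:ℂ) * 2 + v / 2 * 2 ^ 2 - 2 * (μ * 1 + v / 2 * 1 ^ 2) = v by ring]
  field_simp
  ring

lemma interval_exists (R a b : ℝ)
    (h0 : (0 : ℝ) ∈ Set.Ioo a b) (h2 : (2 : ℝ) ∈ Set.Ioo a b) (h2R : 2 * R ∈ Set.Ioo a b) :
    ∃ a' b' ε : ℝ, a < a' ∧ a' ≤ 0 ∧ 0 ≤ b' ∧ b' < b ∧ 0 < ε ∧
      ∀ l ∈ Set.Ioo (-ε) (1 + ε), ∀ v ∈ Set.Icc (min 0 (2 * R)) (max 2 (2 * R)),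
        a' ≤ l * v ∧ l * v ≤ b' := by
  have hm : a < min 0 (2 * R) := lt_min h0.1 h2R.1
  have hM : max 2 (2 * R) < b := max_lt h2.2 h2R.2
  have hm0 : min 0 (2 * R) ≤ 0 := min_le_left _ _
  have hM2 : 2 ≤ max 2 (2 * R) := le_max_left _ _
  generalize min 0 (2 * R) = m at *
  generalize max 2 (2 * R) = M at *
  have hL : 0 < M - m + 1 := by linarith
  obtain ⟨d, hd, hd1, hd2⟩ : ∃ d > 0, d ≤ (m - a) / 2 ∧ d ≤ (b - M) / 2 :=
    ⟨min ((m - a) / 2) ((b - M) / 2), lt_min (by linarith) (by linarith), min_le_left _ _,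
      min_le_right _ _⟩
  have hε : 0 < d / (M - m + 1) := by positivity
  have hεL : d / (M - m + 1) * (M - m + 1) = d := by field_simp
  generalize d / (M - m + 1) = ε at *
  refine ⟨(a + m) / 2, (b + M) / 2, ε, by linarith, by linarith, by linarith, by linarith,
    hε, ?_⟩
  rintro l ⟨l1, l2⟩ v ⟨v1, v2⟩
  rcases le_total 0 v with hv | hv
  · constructor
    · have : -ε * v ≤ l * v := by gcongr
      nlinarith
    · have : l * v ≤ (1 + ε) * v := by gcongr
      nlinarith
  · constructor
    · have : (1 + ε) * v ≤ l * v := by nlinarith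
      nlinarith
    · have : l * v ≤ -ε * v := by nlinarith
      nlinarith

/-- second-order expansion of the feedback part `χ(t,s,g)` of the
variance-optimal hedge ratio (Theorem `ApproxRatioVoHedge`). -/
theorem feedback_term_expansion
    (μ c : ℝ) (hc : 0 ≤ c) (K : MeasureTheory.Measure ℝ)
    (hK0 : K {0} = 0)
    (hKmin : ∫⁻ x : ℝ, ENNReal.ofReal (min 1 (x ^ 2)) ∂K ≠ ⊤)
    (R : ℝ) (hR : R ≠ 0) (a b : ℝ)
    (h0 : (0 : ℝ) ∈ Set.Ioo a b) (h2 : (2 : ℝ) ∈ Set.Ioo a b)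
    (h2R : 2 * R ∈ Set.Ioo a b)
    (hK5 : ∫⁻ x in {x : ℝ | 1 ≤ |x|}, ENNReal.ofReal (|x| ^ 5) ∂K ≠ ⊤)
    (hKexp : ∀ s ∈ Set.Ioo a b,
      ∫⁻ x in {x : ℝ | 1 ≤ |x|}, ENNReal.ofReal (Real.exp (s * x)) ∂K ≠ ⊤)
    (σ2 : ℝ) (hσ2 : σ2 = c + ∫ x : ℝ, x ^ 2 ∂K) (hσ2pos : 0 < σ2)
    (f : ℝ → ℝ) (hf : ContDiffOn ℝ (⊤ : ℕ∞) f (Set.Ioi 0))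
    (l : ℝ → ℝ) (hl : l = fun x => f (Real.exp x) * Real.exp (-R * x))
    (hlint : ∀ n : ℕ, Integrable (iteratedDeriv n l))
    (T t s S₀ g : ℝ) (hT : 0 < T) (ht : t ∈ Set.Ico 0 T) (hs : 0 < s) (hS₀ : 0 < S₀)
    (Hf : ℝ → ℝ → ℝ → ℂ)
    (hHf : ∀ (u x lam : ℝ), Hf u x lam =
      ∫ y : ℝ, cpowR x (zLine R y) *
        Complex.exp (etaLK μ c K lam (zLine R y) * ((T : ℂ) - (u : ℂ))) * pCoef l y)
    (χ : ℝ → ℂ)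
    (hχ : ∀ lam : ℝ, χ lam =
      LamMV μ c K lam / (s : ℂ) * (Hf t s lam - Hf 0 S₀ lam - (g : ℂ))) :
    ContDiffOn ℝ 2 χ (Set.Icc 0 1) ∧
    χ 0 = LamMV μ c K 0 / (s : ℂ) *
      (cashGreek σ2 T R l 0 t s - cashGreek σ2 T R l 0 0 S₀ - (g : ℂ)) ∧
    iteratedDerivWithin 1 χ (Set.Icc 0 1) 0 =
      iteratedDerivWithin 1 (LamMV μ c K) (Set.Icc 0 1) 0 / (s : ℂ) *
          (cashGreek σ2 T R l 0 t s - cashGreek σ2 T R l 0 0 S₀ - (g : ℂ)) +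
        LamMV μ c K 0 / (s : ℂ) *
          (iteratedDerivWithin 1 (Hf t s) (Set.Icc 0 1) 0 -
            iteratedDerivWithin 1 (Hf 0 S₀) (Set.Icc 0 1) 0) ∧
    iteratedDerivWithin 2 χ (Set.Icc 0 1) 0 =
      iteratedDerivWithin 2 (LamMV μ c K) (Set.Icc 0 1) 0 / (s : ℂ) *
          (cashGreek σ2 T R l 0 t s - cashGreek σ2 T R l 0 0 S₀ - (g : ℂ)) +
        2 * (iteratedDerivWithin 1 (LamMV μ c K) (Set.Icc 0 1) 0 / (s : ℂ)) *
          (iteratedDerivWithin 1 (Hf t s) (Set.Icc 0 1) 0 -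
            iteratedDerivWithin 1 (Hf 0 S₀) (Set.Icc 0 1) 0) +
        LamMV μ c K 0 / (s : ℂ) *
          (iteratedDerivWithin 2 (Hf t s) (Set.Icc 0 1) 0 -
            iteratedDerivWithin 2 (Hf 0 S₀) (Set.Icc 0 1) 0) := by
  obtain ⟨a', b', ε, haa, ha, hb, hbb, hε, hstrip⟩ := interval_exists R a b h0 h2 h2R
  have hG : ∀ k, Integrable (domK a' b' k) K :=
    domK_integrable K hKmin hKexp haa ha hb hbb
  rw [hσ2] at hσ2pos
  have hm1 : (1:ℝ) ∈ Set.Icc (min 0 (2 * R)) (max 2 (2 * R)) :=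
    ⟨(min_le_left _ _).trans (by norm_num), le_trans (by norm_num) (le_max_left _ _)⟩
  have hm2 : (2:ℝ) ∈ Set.Icc (min 0 (2 * R)) (max 2 (2 * R)) :=
    ⟨(min_le_left _ _).trans (by norm_num), le_max_left _ _⟩
  have hm2R : 2 * R ∈ Set.Icc (min 0 (2 * R)) (max 2 (2 * R)) :=
    ⟨min_le_right _ _, le_max_right _ _⟩
  have hmR : R ∈ Set.Icc (min 0 (2 * R)) (max 2 (2 * R)) := by
    have := min_le_left 0 (2 * R)
    have := min_le_right 0 (2 * R)
    have := le_max_left 2 (2 * R)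
    have := le_max_right 2 (2 * R)
    constructor <;> linarith
  have hmR1 : R + 1 ∈ Set.Icc (min 0 (2 * R)) (max 2 (2 * R)) := by
    have := min_le_left 0 (2 * R)
    have := min_le_right 0 (2 * R)
    have := le_max_left 2 (2 * R)
    have := le_max_right 2 (2 * R)
    constructor <;> linarith
  have hVo : IsOpen (Set.Ioo (-ε) (1 + ε)) := isOpen_Ioo
  have hUo : IsOpen (Set.Ioo (-(ε / 2)) (1 + ε / 2)) := isOpen_Ioo
  have hA : IsCompact (Set.Icc (-(ε / 2)) (1 + ε / 2)) := isCompact_Icc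
  have hUA : Set.Ioo (-(ε / 2)) (1 + ε / 2) ⊆ Set.Icc (-(ε / 2)) (1 + ε / 2) := Ioo_subset_Icc_self
  have hAV : Set.Icc (-(ε / 2)) (1 + ε / 2) ⊆ Set.Ioo (-ε) (1 + ε) :=
    fun x hx => ⟨by linarith [hx.1], by linarith [hx.2]⟩
  have hIU : Set.Icc (0:ℝ) 1 ⊆ Set.Ioo (-(ε / 2)) (1 + ε / 2) :=
    fun x hx => ⟨by linarith [hx.1], by linarith [hx.2]⟩
  generalize Set.Ioo (-ε) (1 + ε) = V at *
  generalize Set.Icc (-(ε / 2)) (1 + ε / 2) = A at *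
  generalize Set.Ioo (-(ε / 2)) (1 + ε / 2) = U at *
  have hUV : U ⊆ V := hUA.trans hAV
  -- smoothness of kappa and LamMV
  have hkap : ∀ (n : ℕ) (z : ℂ), z.re ∈ Set.Icc (min 0 (2 * R)) (max 2 (2 * R)) →
      ContDiffOn ℝ n (fun l => kappa μ c K l z) V := by
    intro n z hz
    simp only [kappa_eq]
    exact contDiffOn_const.add (contDiffOn_const.mul
      (PhiK_contDiffOn 0 n ha hb hG hVo (fun l hl => hstrip l hl _ hz)))
  have hk1 : ∀ n : ℕ, ContDiffOn ℝ n (fun l => kappa μ c K l 1) V :=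
    fun n => hkap n 1 (by simpa using hm1)
  have hk2 : ∀ n : ℕ, ContDiffOn ℝ n (fun l => kappa μ c K l 2) V :=
    fun n => hkap n 2 (by simpa using hm2)
  have hden : ∀ n : ℕ, ContDiffOn ℝ n (fun l => kappa μ c K l 2 - 2 * kappa μ c K l 1) V :=
    fun n => (hk2 n).sub (contDiffOn_const.mul (hk1 n))
  have hLam : ∀ n : ℕ, ContDiffOn ℝ n (LamMV μ c K) V := by
    intro n
    have : LamMV μ c K = fun l => kappa μ c K l 1 * (kappa μ c K l 2 - 2 * kappa μ c K l 1)⁻¹ := by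
      ext l; simp [LamMV, div_eq_mul_inv]
    rw [this]
    exact (hk1 n).mul ((hden n).inv fun l hl =>
      denom_pos μ c hc K hK0 hσ2pos ha hb hG (hstrip l hl 1 hm1) (hstrip l hl 2 hm2))
  -- eta is in the nice class
  have hzc : Continuous (zLine R) := by unfold zLine; fun_prop
  have hzre : ∀ y, (zLine R y).re = R := by intro y; simp [zLine]
  have hzn : ∀ n, Nice U n (fun _ y => zLine R y) := by
    intro n
    refine nice_of_y U n hzc (C := |R| + 1) (N := 1) (by positivity) fun y => ?_
    have h1 : ‖zLine R y‖ ≤ |R| + |y| := by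
      unfold zLine
      refine (norm_add_le _ _).trans (le_of_eq ?_)
      simp
    nlinarith [abs_nonneg R, abs_nonneg y]
  have hz1n : ∀ n, Nice U n (fun _ y => zLine R y + 1) := fun n => (hzn n).add (nice_const U n 1)
  have hkn : ∀ (n : ℕ) (z : ℝ → ℂ), Continuous z → (∀ n, Nice U n (fun _ y => z y)) →
      (∀ y, (z y).re ∈ Set.Icc (min 0 (2 * R)) (max 2 (2 * R))) →
      Nice U n (fun l y => kappa μ c K l (z y)) := by
    intro n z hz hzn hzm
    have hP := nice_PhiK 0 n ha hb hG hUo hz (fun l hl y => hstrip l (hUV hl) _ (hzm y)) hzn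
    have hz2 : Nice U n (fun _ y => z y ^ 2) := by
      simp only [pow_two]
      exact (hzn n).mul (hzn n)
    simp only [kappa_eq]
    exact (((nice_const U n μ).mul (hzn n)).add ((nice_const U n ((c:ℂ) / 2)).mul hz2)).add (hz2.mul hP)
  have hηn : ∀ n, Nice U n (fun l y => etaLK μ c K l (zLine R y)) := by
    intro n
    simp only [eta_eq]
    have n1 := hkn n (zLine R) hzc hzn (fun y => by rw [hzre]; exact hmR)
    have n2 := hkn n (fun y => zLine R y + 1) (by fun_prop) hz1n
      (fun y => by simpa [hzre] using hmR1)
    have n3 := nice_of_contDiffOn hVo hA hUA hAV n (hk1 n)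
    have n4 := nice_of_contDiffOn hVo hA hUA hAV n (hLam n)
    exact n1.sub (n4.mul ((n2.sub n1).sub n3))
  -- upper bound of the real part
  obtain ⟨B, hB⟩ : ∃ B : ℝ, ∀ l ∈ U, ∀ y, (etaLK μ c K l (zLine R y)).re ≤ B := by
    have c1 : ContinuousOn (fun l => kappa μ c K l ((2 * R : ℝ) : ℂ)) V :=
      (hkap 0 _ (by rw [Complex.ofReal_re]; exact hm2R)).continuousOn
    have c2 := (hLam 0).continuousOn
    have c3 := (hden 0).continuousOn
    have c4 : ContinuousOn (fun l => (kappa μ c K l ((2 * R : ℝ) : ℂ)).re / 2 +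
        Complex.normSq (LamMV μ c K l) / 2 * (kappa μ c K l 2 - 2 * kappa μ c K l 1).re) V :=
      ((Complex.continuous_re.comp_continuousOn c1).div_const 2).add
        (((Complex.continuous_normSq.comp_continuousOn c2).div_const 2).mul
          (Complex.continuous_re.comp_continuousOn c3))
    obtain ⟨B, hB⟩ := hA.exists_bound_of_continuousOn (c4.mono hAV)
    refine ⟨B, fun l hl y => ?_⟩
    have hlV := hUV hl
    rw [eta_eq]
    refine (re_eta_le μ c hc K ha hb hG (hstrip l hlV 1 hm1) (hstrip l hlV 2 hm2)
      (by rw [hzre]; exact hstrip l hlV R hmR) (by rw [hzre]; exact hstrip l hlV _ hmR1)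
      (by rw [hzre]; exact hstrip l hlV _ hm2R)).trans ?_
    rw [hzre]
    exact (le_abs_self _).trans (hB l (hUA hl))
  -- the payoff
  have hlC : ContDiff ℝ (⊤ : ℕ∞) l := by
    rw [hl]
    have h1 : ContDiff ℝ (⊤ : ℕ∞) (fun x => f (Real.exp x)) :=
      hf.comp_contDiff Real.contDiff_exp (fun x => Real.exp_pos x)
    exact h1.mul (Real.contDiff_exp.comp (contDiff_const.mul contDiff_id))
  have hlI : Integrable l := by simpa using hlint 0
  have hHC : ∀ u x : ℝ, u ≤ T → ContDiffOn ℝ 2 (Hf u x) U := by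
    intro u x hu
    have hwc : Continuous (fun y => cpowR x (zLine R y) * pCoef l y) := by
      have := lhat_continuous hlI
      unfold cpowR pCoef
      fun_prop
    have hw : ∀ N : ℕ, Integrable (fun y => (1 + |y|) ^ N * ‖cpowR x (zLine R y) * pCoef l y‖) := by
      intro N
      refine ((weight_integrable hlC hlint N).const_mul
        (Real.exp (R * Real.log x) / ‖2 * (Real.pi : ℂ)‖)).congr
        (Filter.Eventually.of_forall fun y => ?_)
      simp only [pCoef, cpowR, norm_mul, norm_div, Complex.norm_exp, Complex.re_mul_ofReal, hzre]
      ring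
    have hq := nice_const U 2 1
    have key := int_contDiffOn hUo hwc hw hηn ((T : ℂ) - (u : ℂ)) (B := Real.exp (|B| * (T - u))) (by
      intro l hl y
      rw [Complex.norm_exp, ← Complex.ofReal_sub, Complex.re_mul_ofReal]
      have h1 := (hB l hl y).trans (le_abs_self B)
      have h2 : 0 ≤ T - u := by linarith
      gcongr) 2 hq
    refine key.congr fun l hl => ?_
    rw [hHf]
    congr 1
    ext y
    ring
  have hH0 : ∀ u x : ℝ, Hf u x 0 = cashGreek σ2 T R l 0 u x := by
    intro u x
    rw [hHf]
    unfold cashGreek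
    simp only [eta_zero μ c K hσ2pos, hσ2, Finset.range_zero, Finset.prod_empty, one_mul]
  have hlei := leibniz_aux (L := LamMV μ c K) (h1 := Hf t s) (h2 := Hf 0 S₀) (χ := χ) (g := (g:ℂ))
    (s := (s:ℂ)) (S := Set.Icc (0:ℝ) 1) (uniqueDiffOn_Icc zero_lt_one) (by simp)
    ((hLam 2).mono (hIU.trans hUV)) ((hHC t s ht.2.le).mono hIU) ((hHC 0 S₀ hT.le).mono hIU) hχ
  rw [hH0, hH0] at hlei
  refine ⟨hlei.1, ?_, hlei.2.1, hlei.2.2⟩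
  rw [hχ, hH0, hH0]
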